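/- arXiv:2203.01031 — 3 statements merged into one kernel-verified Lean document; each statement's English description precedes it below -/
import Mathlib

section
/- Let n = dim_k V and let W ⊆ V be an isotropic subspace of dimension r with ordered basis (w₁,…,w_r) and ω = ι(w₁)⋯ι(w_r). Then dim_k(Cl(q)·ω) = 2^{n−r} and dim_k(ω·Cl(q)) = 2^{n−r}. Moreover, if r < n, then dim_k((Cl(q)·ω) ∩ Cl(q)₀) = dim_k((Cl(q)·ω) ∩ Cl(q)₁) = 2^{n−r−1}. (These are the rank computations for the Clifford ideals I_k^W and I_k^{∘W} used in the proof of Lemma 2.6: each graded piece has rank 2^{rank(E)−r−1}.) -/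
open CliffordAlgebra

/-!
Left multiplication by `ι v` and left contraction by a functional `d` with `d v = 1` satisfy the
homotopy identity `ι v * (d⌋x) + d⌋(ι v * x) = x`. If `Q v = 0`, multiplication by `ι v` squares to
zero, so on every subspace stable under both operators its kernel equals its image, and its rank is
half the dimension. Multiplying on the left by the `wᵢ` one at a time therefore halves the dimension
`2 ^ n` of the Clifford algebra `r` times. Reversal exchanges left and right ideals.

If `u` lies outside `W` and `e` is a functional with `e u = 1` and `e = 0` on `W`, then the odd
operator `x ↦ ι u * x + (1 - Q u) • (e⌋x)` preserves `Cl(Q) * ω` and, by the same identity, squares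
to the identity; hence it exchanges the even and odd parts of the ideal.
-/

section Module

variable {R M : Type*} [Semiring R] [AddCommMonoid M] [Module R M]

theorem inf_ker_eq_map_of_homotopy {J : Submodule R M} {f g : M →ₗ[R] M}
    (hf : ∀ x, f (f x) = 0) (hfg : ∀ x, f (g x) + g (f x) = x)
    (hfJ : ∀ x ∈ J, f x ∈ J) (hgJ : ∀ x ∈ J, g x ∈ J) :
    J ⊓ LinearMap.ker f = J.map f := by
  apply le_antisymm
  · rintro x ⟨hxJ, hx : f x = 0⟩
    exact ⟨g x, hgJ x hxJ, by simpa only [hx, map_zero, add_zero] using hfg x⟩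
  · rintro _ ⟨x, hxJ, rfl⟩
    exact ⟨hfJ x hxJ, hf x⟩

theorem finrank_eq_of_involutive_of_mapsTo {p q : Submodule R M} {f : M →ₗ[R] M}
    (hf : Function.Involutive f) (hpq : ∀ x ∈ p, f x ∈ q) (hqp : ∀ x ∈ q, f x ∈ p) :
    Module.finrank R p = Module.finrank R q := by
  have hmap : p.map (LinearEquiv.ofInvolutive f hf).toLinearMap = q := by
    apply le_antisymm
    · rintro _ ⟨x, hx, rfl⟩
      exact hpq x hx
    · exact fun x hx ↦ ⟨f x, hqp x hx, hf x⟩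
  rw [← hmap, LinearEquiv.finrank_map_eq]

end Module

section VectorSpace

variable {k E : Type*} [AddCommGroup E]

theorem two_mul_finrank_map_of_inf_ker_eq_map [DivisionRing k] [Module k E]
    {J : Submodule k E} [FiniteDimensional k J] {f : E →ₗ[k] E}
    (hJ : J ⊓ LinearMap.ker f = J.map f) :
    2 * Module.finrank k (J.map f) = Module.finrank k J := by
  have hker : Module.finrank k (LinearMap.ker (f.domRestrict J)) = Module.finrank k (J.map f) := by
    rw [LinearMap.ker_domRestrict, ← Submodule.finrank_map_subtype_eq, Submodule.map_comap_subtype,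
      hJ]
  have hrank := LinearMap.finrank_range_add_finrank_ker (f.domRestrict J)
  rwa [LinearMap.range_domRestrict, hker, ← two_mul] at hrank

theorem exists_dual_apply_eq_one_of_notMem [Field k] [Module k E] {p : Submodule k E} {v : E}
    (hv : v ∉ p) :
    ∃ d : Module.Dual k E, d v = 1 ∧ ∀ u ∈ p, d u = 0 := by
  obtain ⟨d, hdp, hdv⟩ := LinearMap.exists_extend_of_notMem (0 : p →ₗ[k] k) hv 1
  exact ⟨d, hdv, fun u hu ↦ LinearMap.congr_fun hdp ⟨u, hu⟩⟩

end VectorSpace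

section Algebra

variable {R A : Type*} [CommSemiring R] [Semiring A] [Algebra R A]

theorem span_setOf_exists_eq_mul_right (a : A) :
    Submodule.span R {y | ∃ x : A, y = x * a} = LinearMap.range (LinearMap.mulRight R a) := by
  rw [← Submodule.span_eq (LinearMap.range (LinearMap.mulRight R a))]
  congr 1
  ext y
  simp [eq_comm]

theorem span_setOf_exists_eq_mul_left (a : A) :
    Submodule.span R {y | ∃ x : A, y = a * x} = LinearMap.range (LinearMap.mulLeft R a) := by
  rw [← Submodule.span_eq (LinearMap.range (LinearMap.mulLeft R a))]
  congr 1
  ext y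
  simp [eq_comm]

end Algebra

theorem eq_two_pow_pred_of_two_mul_eq {a m : ℕ} (hm : 0 < m) (h : 2 * a = 2 ^ m) :
    a = 2 ^ (m - 1) :=
  Nat.eq_of_mul_eq_mul_left two_pos (h.trans (mul_pow_sub_one hm.ne' 2).symm)

section CommRing

variable {R M : Type*} [CommRing R] [AddCommGroup M] [Module R M] (Q : QuadraticForm R M)

-- A basis of `M` gives a bilinear form `B` with `B v v = -Q v`, which replaces half the polar form
-- of `-Q` in characteristic two.
theorem nonempty_linearEquiv_exteriorAlgebra [Module.Free R M] :
    Nonempty (CliffordAlgebra Q ≃ₗ[R] ExteriorAlgebra R M) := by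
  obtain ⟨B, hB⟩ := LinearMap.BilinMap.toQuadraticMap_surjective (0 - Q)
  exact ⟨changeFormEquiv hB⟩

theorem finite_cliffordAlgebra [Module.Free R M] [Module.Finite R M] :
    Module.Finite R (CliffordAlgebra Q) := by
  nontriviality R
  obtain ⟨e⟩ := nonempty_linearEquiv_exteriorAlgebra Q
  exact .of_basis ((Module.finBasis R M).ExteriorAlgebra.map e.symm)

theorem finrank_cliffordAlgebra [Nontrivial R] [Module.Free R M] [Module.Finite R M] :
    Module.finrank R (CliffordAlgebra Q) = 2 ^ Module.finrank R M := by
  obtain ⟨e⟩ := nonempty_linearEquiv_exteriorAlgebra Q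
  rw [e.finrank_eq, Module.finrank_eq_card_basis (Module.finBasis R M).ExteriorAlgebra,
    Fintype.card_finset, Fintype.card_fin]

theorem finrank_range_mulLeft_reverse (a : CliffordAlgebra Q) :
    Module.finrank R (LinearMap.range (LinearMap.mulLeft R (reverse a))) =
      Module.finrank R (LinearMap.range (LinearMap.mulRight R a)) := by
  have hconj : LinearMap.mulLeft R (reverse a) =
      reverseEquiv.toLinearMap ∘ₗ LinearMap.mulRight R a ∘ₗ reverseEquiv.toLinearMap := by
    ext x
    simp
  rw [hconj, LinearMap.range_comp, LinearEquiv.finrank_map_eq,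
    LinearMap.range_comp_of_range_eq_top _ reverseEquiv.range]

variable {Q}

theorem contractLeft_mem_evenOdd (d : Module.Dual R M) {i : ZMod 2} {x : CliffordAlgebra Q}
    (hx : x ∈ evenOdd Q i) : contractLeft d x ∈ evenOdd Q (i + 1) := by
  have htwo (j : ZMod 2) : j + 1 + 1 = j := by rw [add_assoc, CharTwo.add_self_eq_zero, add_zero]
  have hpow (n : ℕ) (y) (hy : y ∈ LinearMap.range (ι Q) ^ n) :
      contractLeft d y ∈ evenOdd Q (n + 1) := by
    induction hy using Submodule.pow_induction_on_left' with
    | algebraMap r => simp only [contractLeft_algebraMap, zero_mem]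
    | add y z n _ _ ihy ihz => simpa only [map_add] using add_mem ihy ihz
    | mem_mul m hm n y hy ih =>
      obtain ⟨v, rfl⟩ := hm
      rw [contractLeft_ι_mul, Nat.cast_succ]
      apply sub_mem
      · rw [htwo]
        exact Submodule.smul_mem _ _ (Submodule.mem_iSup_of_mem ⟨n, rfl⟩ hy)
      · rw [add_comm]
        exact SetLike.mul_mem_graded (ι_mem_evenOdd_one Q v) ih
  induction hx using Submodule.iSup_induction' with
  | mem n x hx => exact n.2 ▸ hpow n x hx
  | zero => simp only [map_zero, zero_mem]
  | add x y _ _ ihx ihy => simpa only [map_add] using add_mem ihx ihy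

theorem contractLeft_mul_of_contractLeft_eq_zero {d : Module.Dual R M} {a : CliffordAlgebra Q}
    (ha : contractLeft d a = 0) (x : CliffordAlgebra Q) :
    contractLeft d (x * a) = contractLeft d x * a := by
  induction x using left_induction with
  | algebraMap r => simp [contractLeft_algebraMap_mul, ha]
  | add x y hx hy => simp only [add_mul, map_add, hx, hy]
  | ι_mul x v hx => rw [mul_assoc, contractLeft_ι_mul, hx, contractLeft_ι_mul, sub_mul,
      smul_mul_assoc, mul_assoc]

theorem ι_mul_contractLeft_add_contractLeft_ι_mul {d : Module.Dual R M} {v : M} (hv : d v = 1)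
    (x : CliffordAlgebra Q) : ι Q v * contractLeft d x + contractLeft d (ι Q v * x) = x := by
  rw [contractLeft_ι_mul, hv, one_smul, add_sub_cancel]

section VectorProd

variable (Q)

/-- The product `ι (w 0) * ⋯ * ι (w (r - 1))` in the Clifford algebra of a finite sequence of
vectors, in increasing order of the index; it generates the Clifford ideals of an isotropic
subspace with basis `w`. -/
def vectorProd {r : ℕ} (w : Fin r → M) : CliffordAlgebra Q :=
  (List.ofFn fun i ↦ ι Q (w i)).prod

theorem vectorProd_zero (w : Fin 0 → M) : vectorProd Q w = 1 := rfl

theorem vectorProd_succ {r : ℕ} (w : Fin (r + 1) → M) :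
    vectorProd Q w = ι Q (w 0) * vectorProd Q (Fin.tail w) := by
  rw [vectorProd, List.ofFn_succ, List.prod_cons]
  rfl

theorem vectorProd_mem_evenOdd {r : ℕ} (w : Fin r → M) : vectorProd Q w ∈ evenOdd Q r := by
  simpa using! SetLike.list_prod_ofFn_mem_graded (A := evenOdd Q) (fun _ : Fin r ↦ 1) _
    fun i ↦ ι_mem_evenOdd_one Q (w i)

theorem reverse_vectorProd {r : ℕ} (w : Fin r → M) :
    reverse (vectorProd Q w) = vectorProd Q (w ∘ Fin.rev) := by
  have hrev : (List.ofFn w).reverse = List.ofFn (w ∘ Fin.rev) :=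
    List.ext_getElem (by simp) fun i hi _ ↦ by simp [Fin.rev, Nat.sub_sub, Nat.add_comm]
  have hmap {r : ℕ} (v : Fin r → M) : vectorProd Q v = ((List.ofFn v).map (ι Q)).prod := by
    rw [List.map_ofFn]
    rfl
  rw [hmap, hmap, reverse_prod_map_ι, ← List.map_reverse, hrev]

variable {Q}

theorem contractLeft_vectorProd_mul {d : Module.Dual R M} {r : ℕ} {w : Fin r → M}
    (hw : ∀ i, d (w i) = 0) (x : CliffordAlgebra Q) :
    contractLeft d (vectorProd Q w * x) = (-1 : R) ^ r • (vectorProd Q w * contractLeft d x) := by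
  induction r with
  | zero => simp [vectorProd_zero]
  | succ r ih =>
    rw [vectorProd_succ, mul_assoc, contractLeft_ι_mul, hw 0, zero_smul, zero_sub,
      ih (w := Fin.tail w) fun i ↦ hw i.succ, pow_succ, mul_neg_one, neg_smul, mul_smul_comm,
      mul_assoc]

theorem contractLeft_vectorProd {d : Module.Dual R M} {r : ℕ} {w : Fin r → M}
    (hw : ∀ i, d (w i) = 0) : contractLeft d (vectorProd Q w) = 0 := by
  simpa using contractLeft_vectorProd_mul (Q := Q) hw 1

theorem ι_mul_vectorProd_of_isOrtho {v : M} {r : ℕ} {w : Fin r → M}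
    (hw : ∀ i, Q.IsOrtho v (w i)) :
    ι Q v * vectorProd Q w = (-1 : R) ^ r • (vectorProd Q w * ι Q v) := by
  induction r with
  | zero => simp [vectorProd_zero]
  | succ r ih =>
    rw [vectorProd_succ, ι_mul_ι_mul_of_isOrtho _ (hw 0), ih (w := Fin.tail w) fun i ↦ hw i.succ,
      pow_succ, mul_neg_one, neg_smul, mul_smul_comm, mul_assoc]

end VectorProd

section OddInvolution

variable (Q)

/-- The operator `x ↦ ι u * x + (1 - Q u) • (d⌋x)` on the Clifford algebra. It is odd and, when
`d u = 1`, the coefficient `1 - Q u` makes it square to the identity, even if `Q u = 0`. -/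
def oddInvolution (d : Module.Dual R M) (u : M) : CliffordAlgebra Q →ₗ[R] CliffordAlgebra Q :=
  LinearMap.mulLeft R (ι Q u) + (1 - Q u) • contractLeft d

theorem oddInvolution_apply (d : Module.Dual R M) (u : M) (x : CliffordAlgebra Q) :
    oddInvolution Q d u x = ι Q u * x + (1 - Q u) • contractLeft d x := rfl

theorem oddInvolution_involutive {d : Module.Dual R M} {u : M} (hu : d u = 1) :
    Function.Involutive (oddInvolution Q d u) := fun x ↦ by
  have hsq : ι Q u * (ι Q u * x) = Q u • x := by
    rw [← mul_assoc, ι_sq_scalar, Algebra.smul_def]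
  calc oddInvolution Q d u (oddInvolution Q d u x)
      = ι Q u * (ι Q u * x) +
          (1 - Q u) • (contractLeft d (ι Q u * x) + ι Q u * contractLeft d x) := by
        simp only [oddInvolution_apply, map_add, map_smul, contractLeft_contractLeft, smul_zero,
          add_zero, smul_add, add_assoc]
    _ = Q u • x + (1 - Q u) • x := by
        rw [hsq, add_comm (contractLeft d _), ι_mul_contractLeft_add_contractLeft_ι_mul hu]
    _ = x := by rw [← add_smul, add_sub_cancel, one_smul]

variable {Q}

theorem oddInvolution_mem_evenOdd (d : Module.Dual R M) (u : M) {i : ZMod 2}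
    {x : CliffordAlgebra Q} (hx : x ∈ evenOdd Q i) :
    oddInvolution Q d u x ∈ evenOdd Q (i + 1) :=
  add_mem (add_comm 1 i ▸ SetLike.mul_mem_graded (ι_mem_evenOdd_one Q u) hx)
    (Submodule.smul_mem _ _ (contractLeft_mem_evenOdd d hx))

theorem oddInvolution_mul {d : Module.Dual R M} {a : CliffordAlgebra Q}
    (ha : contractLeft d a = 0) (u : M) (x : CliffordAlgebra Q) :
    oddInvolution Q d u (x * a) = oddInvolution Q d u x * a := by
  rw [oddInvolution_apply, oddInvolution_apply, contractLeft_mul_of_contractLeft_eq_zero ha,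
    add_mul, mul_assoc, smul_mul_assoc]

end OddInvolution

theorem sup_inf_evenOdd_range_mulRight {a : CliffordAlgebra Q} {i : ZMod 2}
    (ha : a ∈ evenOdd Q i) :
    LinearMap.range (LinearMap.mulRight R a) ⊓ evenOdd Q 0 ⊔
        LinearMap.range (LinearMap.mulRight R a) ⊓ evenOdd Q 1 =
      LinearMap.range (LinearMap.mulRight R a) := by
  refine le_antisymm (sup_le inf_le_left inf_le_left) ?_
  rintro _ ⟨x, rfl⟩
  obtain ⟨x₀, hx₀, x₁, hx₁, rfl⟩ :=
    Submodule.mem_sup.mp ((evenOdd_isCompl Q).sup_eq_top ▸ Submodule.mem_top (x := x))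
  have h₀ := SetLike.mul_mem_graded hx₀ ha
  have h₁ := SetLike.mul_mem_graded hx₁ ha
  rw [map_add]
  fin_cases i
  · exact Submodule.add_mem_sup ⟨⟨x₀, rfl⟩, h₀⟩ ⟨⟨x₁, rfl⟩, h₁⟩
  · rw [add_comm]
    exact Submodule.add_mem_sup ⟨⟨x₁, rfl⟩, h₁⟩ ⟨⟨x₀, rfl⟩, h₀⟩

end CommRing

section Field

variable {k V : Type*} [Field k] [AddCommGroup V] [Module k V] [FiniteDimensional k V]
  {Q : QuadraticForm k V}

theorem two_mul_finrank_range_mulRight_inf_evenOdd {a : CliffordAlgebra Q} {j : ZMod 2}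
    (haj : a ∈ evenOdd Q j) {d : Module.Dual k V} (hda : contractLeft d a = 0) {u : V}
    (hu : d u = 1) (i : ZMod 2) :
    2 * Module.finrank k ↥(LinearMap.range (LinearMap.mulRight k a) ⊓ evenOdd Q i) =
      Module.finrank k (LinearMap.range (LinearMap.mulRight k a)) := by
  have := finite_cliffordAlgebra Q
  set L := LinearMap.range (LinearMap.mulRight k a)
  have hswap (i : ZMod 2) (x) (hx : x ∈ L ⊓ evenOdd Q i) :
      oddInvolution Q d u x ∈ L ⊓ evenOdd Q (i + 1) := by
    obtain ⟨⟨y, rfl⟩, hi⟩ := hx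
    exact ⟨⟨oddInvolution Q d u y, (oddInvolution_mul hda u y).symm⟩,
      oddInvolution_mem_evenOdd d u hi⟩
  have heq : Module.finrank k ↥(L ⊓ evenOdd Q 0) = Module.finrank k ↥(L ⊓ evenOdd Q 1) :=
    finrank_eq_of_involutive_of_mapsTo (oddInvolution_involutive Q hu) (hswap 0) (hswap 1)
  have hdisj : L ⊓ evenOdd Q 0 ⊓ (L ⊓ evenOdd Q 1) = ⊥ :=
    ((evenOdd_isCompl Q).disjoint.mono inf_le_right inf_le_right).eq_bot
  have hsum := Submodule.finrank_sup_add_finrank_inf_eq (L ⊓ evenOdd Q 0) (L ⊓ evenOdd Q 1)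
  have hsup : L ⊓ evenOdd Q 0 ⊔ L ⊓ evenOdd Q 1 = L := sup_inf_evenOdd_range_mulRight haj
  rw [hsup, hdisj, finrank_bot, add_zero] at hsum
  obtain rfl | rfl : i = 0 ∨ i = 1 := by decide +revert
  · rw [hsum, ← heq, two_mul]
  · rw [hsum, heq, two_mul]

theorem two_mul_finrank_range_mulLeft_vectorProd {r : ℕ} {w : Fin (r + 1) → V}
    (hli : LinearIndependent k w) (hiso : ∀ u ∈ Submodule.span k (Set.range w), Q u = 0) :
    2 * Module.finrank k (LinearMap.range (LinearMap.mulLeft k (vectorProd Q w))) =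
      Module.finrank k (LinearMap.range (LinearMap.mulLeft k (vectorProd Q (Fin.tail w)))) := by
  have := finite_cliffordAlgebra Q
  have hw (i : Fin (r + 1)) : w i ∈ Submodule.span k (Set.range w) :=
    Submodule.subset_span ⟨i, rfl⟩
  have hQ (i : Fin (r + 1)) : Q (w i) = 0 := hiso _ (hw i)
  have hortho (i j : Fin (r + 1)) : Q.IsOrtho (w i) (w j) := by
    rw [QuadraticMap.isOrtho_def, hQ, hQ, hiso _ (add_mem (hw i) (hw j)), add_zero]
  obtain ⟨d, hd₀, hd⟩ := exists_dual_apply_eq_one_of_notMem (linearIndependent_finSucc.mp hli).2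
  rw [vectorProd_succ, LinearMap.mulLeft_mul, LinearMap.range_comp]
  apply two_mul_finrank_map_of_inf_ker_eq_map
  apply inf_ker_eq_map_of_homotopy (g := contractLeft d)
  · intro x
    simp [← mul_assoc, hQ]
  · exact ι_mul_contractLeft_add_contractLeft_ι_mul hd₀
  · rintro _ ⟨x, rfl⟩
    refine ⟨(-1 : k) ^ r • (ι Q (w 0) * x), ?_⟩
    simp only [LinearMap.mulLeft_apply]
    rw [← mul_assoc, ι_mul_vectorProd_of_isOrtho (w := Fin.tail w) fun i ↦ hortho 0 i.succ,
      mul_smul_comm, smul_mul_assoc, mul_assoc]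
  · rintro _ ⟨x, rfl⟩
    refine ⟨(-1 : k) ^ r • contractLeft d x, ?_⟩
    rw [LinearMap.mulLeft_apply, LinearMap.mulLeft_apply, mul_smul_comm,
      contractLeft_vectorProd_mul (w := Fin.tail w) fun i ↦ hd _ (Submodule.subset_span ⟨i, rfl⟩)]

theorem finrank_range_mulLeft_vectorProd {r : ℕ} {w : Fin r → V}
    (hli : LinearIndependent k w) (hiso : ∀ u ∈ Submodule.span k (Set.range w), Q u = 0) :
    Module.finrank k (LinearMap.range (LinearMap.mulLeft k (vectorProd Q w))) =
      2 ^ (Module.finrank k V - r) := by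
  induction r with
  | zero =>
    rw [vectorProd_zero, LinearMap.mulLeft_one, LinearMap.range_id, finrank_top,
      finrank_cliffordAlgebra, Nat.sub_zero]
  | succ r ih =>
    have htail : Set.range (Fin.tail w) ⊆ Set.range w := Set.range_comp_subset_range Fin.succ w
    have hhalf := two_mul_finrank_range_mulLeft_vectorProd hli hiso
    rw [ih (w := Fin.tail w) (hli.comp _ (Fin.succ_injective r))
      fun u hu ↦ hiso u (Submodule.span_mono htail hu)] at hhalf
    have hr : r < Module.finrank k V := by simpa using hli.fintype_card_le_finrank
    exact eq_two_pow_pred_of_two_mul_eq (Nat.sub_pos_of_lt hr) hhalf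

theorem finrank_range_mulRight_vectorProd {r : ℕ} {w : Fin r → V}
    (hli : LinearIndependent k w) (hiso : ∀ u ∈ Submodule.span k (Set.range w), Q u = 0) :
    Module.finrank k (LinearMap.range (LinearMap.mulRight k (vectorProd Q w))) =
      2 ^ (Module.finrank k V - r) := by
  rw [← finrank_range_mulLeft_reverse, reverse_vectorProd]
  apply finrank_range_mulLeft_vectorProd (hli.comp _ Fin.rev_injective)
  rwa [Fin.rev_surjective.range_comp]

theorem finrank_range_mulRight_vectorProd_inf_evenOdd {r : ℕ} {w : Fin r → V}
    (hli : LinearIndependent k w) (hiso : ∀ u ∈ Submodule.span k (Set.range w), Q u = 0)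
    (hr : r < Module.finrank k V) (i : ZMod 2) :
    Module.finrank k
        ↥(LinearMap.range (LinearMap.mulRight k (vectorProd Q w)) ⊓ evenOdd Q i) =
      2 ^ (Module.finrank k V - r - 1) := by
  have hlt : Module.finrank k (Submodule.span k (Set.range w)) < Module.finrank k V := by
    rwa [finrank_span_eq_card hli, Fintype.card_fin]
  obtain ⟨u, -, hu⟩ := SetLike.exists_of_lt (Submodule.lt_top_of_finrank_lt_finrank hlt)
  obtain ⟨d, hdu, hdw⟩ := exists_dual_apply_eq_one_of_notMem hu
  have hω : contractLeft d (vectorProd Q w) = 0 :=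
    contractLeft_vectorProd fun i ↦ hdw _ (Submodule.subset_span ⟨i, rfl⟩)
  have hhalf := two_mul_finrank_range_mulRight_inf_evenOdd (vectorProd_mem_evenOdd Q w) hω hdu i
  rw [finrank_range_mulRight_vectorProd hli hiso] at hhalf
  exact eq_two_pow_pred_of_two_mul_eq (Nat.sub_pos_of_lt hr) hhalf

end Field

theorem clifford_ideal_finrank_general
    {k V : Type*} [Field k]
    [AddCommGroup V] [Module k V] [FiniteDimensional k V]
    (Q : QuadraticForm k V) (W : Submodule k V)
    (hiso : ∀ u ∈ W, Q u = 0)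
    (r : ℕ) (w : Fin r → V)
    (hli : LinearIndependent k w)
    (hspan : Submodule.span k (Set.range w) = W)
    (ω : CliffordAlgebra Q)
    (hω : ω = (List.ofFn fun i => ι Q (w i)).prod) :
    Module.finrank k ↥(Submodule.span k {y | ∃ x : CliffordAlgebra Q, y = x * ω}) =
      2 ^ (Module.finrank k V - r) ∧
    Module.finrank k ↥(Submodule.span k {y | ∃ x : CliffordAlgebra Q, y = ω * x}) =
      2 ^ (Module.finrank k V - r) ∧
    (r < Module.finrank k V →
      Module.finrank k
          ↥(Submodule.span k {y | ∃ x : CliffordAlgebra Q, y = x * ω} ⊓ evenOdd Q 0) =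
        2 ^ (Module.finrank k V - r - 1) ∧
      Module.finrank k
          ↥(Submodule.span k {y | ∃ x : CliffordAlgebra Q, y = x * ω} ⊓ evenOdd Q 1) =
        2 ^ (Module.finrank k V - r - 1)) := by
  subst hω hspan
  rw [span_setOf_exists_eq_mul_right, span_setOf_exists_eq_mul_left]
  exact ⟨finrank_range_mulRight_vectorProd hli hiso, finrank_range_mulLeft_vectorProd hli hiso,
    fun hr ↦ ⟨finrank_range_mulRight_vectorProd_inf_evenOdd hli hiso hr 0,
      finrank_range_mulRight_vectorProd_inf_evenOdd hli hiso hr 1⟩⟩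

/-- For an isotropic subspace `W` of dimension `r` with ordered basis
`w₁, …, w_r` and `ω = ι w₁ ⋯ ι w_r`, the left and right Clifford ideals `Cl(q)·ω` and
`ω·Cl(q)` have dimension `2^(n−r)` where `n = dim V`; and if `r < n`, each of the two
graded pieces `(Cl(q)·ω) ∩ Cl(q)₀` and `(Cl(q)·ω) ∩ Cl(q)₁` has dimension `2^(n−r−1)`. -/
theorem clifford_ideal_finrank
    {k V : Type*} [Field k] [Invertible (2 : k)]
    [AddCommGroup V] [Module k V] [FiniteDimensional k V]
    (Q : QuadraticForm k V) (W : Submodule k V)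
    (hiso : ∀ u ∈ W, Q u = 0)
    (r : ℕ) (w : Fin r → V)
    (hli : LinearIndependent k w)
    (hspan : Submodule.span k (Set.range w) = W)
    (ω : CliffordAlgebra Q)
    (hω : ω = (List.ofFn fun i => ι Q (w i)).prod) :
    Module.finrank k ↥(Submodule.span k {y | ∃ x : CliffordAlgebra Q, y = x * ω}) =
      2 ^ (Module.finrank k V - r) ∧
    Module.finrank k ↥(Submodule.span k {y | ∃ x : CliffordAlgebra Q, y = ω * x}) =
      2 ^ (Module.finrank k V - r) ∧
    (r < Module.finrank k V →
      Module.finrank k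
          ↥(Submodule.span k {y | ∃ x : CliffordAlgebra Q, y = x * ω} ⊓ evenOdd Q 0) =
        2 ^ (Module.finrank k V - r - 1) ∧
      Module.finrank k
          ↥(Submodule.span k {y | ∃ x : CliffordAlgebra Q, y = x * ω} ⊓ evenOdd Q 1) =
        2 ^ (Module.finrank k V - r - 1)) :=
  clifford_ideal_finrank_general Q W hiso r w hli hspan ω hω
end

section
/- Let n = dim_k V, let W ⊆ V be an isotropic subspace of dimension r with ordered basis (w₁,…,w_r), and set ω = ι(w₁)⋯ι(w_r). Let λ : Cl(q) → Λⁿ V be the composition of the canonical filtered k-linear isomorphism Cl(q) ≅ Λ•V (which exists since 2 is invertible in k and induces the identity on associated graded pieces) with the projection onto the top exterior power ΛⁿV. Then the k-linear map Φ : Cl(q) → Hom_k(Cl(q)·ω, ΛⁿV) defined by Φ(ξ)(y) = λ(ξ·y) is surjective, and its kernel is exactly {ξ ∈ Cl(q) : ω·ξ = 0}; consequently Φ induces a k-linear isomorphism Cl(q)/{ξ ∈ Cl(q) : ω·ξ = 0} ≅ Hom_k(Cl(q)·ω, ΛⁿV). (This is the fiberwise, ungraded form of the duality of Lemma 2.6: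 (I_k^W)^∨ ≅ I^{∘W}_{r−k} ⊗ det(W)^∨ ⊗ det(E)^∨ ⊗ L^m up to twist.) -/
open CliffordAlgebra

/-!
Write `α` for the grade involution. The top-degree functional `λ` kills contractions, and `v * x`
and `α x * v` differ by a contraction, so `λ (v * x) = λ (α x * v)`. Since `λ ∘ α = (-1)ⁿ λ`, this
says that `λ (x * y) = λ (y * αⁿ⁺¹ x)`: the pairing `(x, y) ↦ λ (x * y)` is twisted symmetric.

It is also nondegenerate. Elements `x` with `λ (y * x) = 0` for all `y` form a left ideal closed
under contraction. Clifford and exterior multiplication by a vector differ by a contraction, so this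
left ideal corresponds to a left ideal of `Λ•V` on which `λ` vanishes, and such an ideal is zero by
the pairing of `Λⁱ` with `Λⁿ⁻ⁱ`. Surjectivity is then a dimension count, and
`λ (ξ * x * ω) = λ (αⁿ⁺¹ ω * ξ * x)` gives the kernel, as `αⁿ⁺¹ ω = ± ω`.
-/

namespace CliffordDuality

section Contraction

variable {R M : Type*} [CommRing R] [AddCommGroup M] [Module R M] {Q Q' : QuadraticForm R M}

theorem contractLeft_mul (d : Module.Dual R M) (x y : CliffordAlgebra Q) :
    contractLeft d (x * y) = contractLeft d x * y + involute x * contractLeft d y := by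
  induction x using CliffordAlgebra.left_induction with
  | algebraMap r => simp [contractLeft_algebraMap_mul]
  | add a b ha hb => simp only [add_mul, map_add, ha, hb]; abel
  | ι_mul x v hx =>
    rw [mul_assoc, contractLeft_ι_mul, hx, contractLeft_ι_mul, map_mul, involute_ι]
    simp only [mul_add, sub_mul, smul_mul_assoc, neg_mul, mul_assoc]
    abel

theorem ι_mul_eq_involute_mul_ι_add_contractLeft (v : M) (x : CliffordAlgebra Q) :
    ι Q v * x = involute x * ι Q v + contractLeft (Q.polarBilin v) x := by
  induction x using CliffordAlgebra.left_induction with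
  | algebraMap r => simp [Algebra.commutes]
  | add a b ha hb => simp only [add_mul, mul_add, map_add, ha, hb]; abel
  | ι_mul x u hx =>
    rw [contractLeft_ι_mul, map_mul, involute_ι, ← mul_assoc, ι_mul_ι_comm, sub_mul, mul_assoc,
      hx, ← Algebra.smul_def]
    simp only [mul_add, neg_mul, mul_assoc, QuadraticMap.polarBilin_apply_apply]
    abel

theorem contractLeft_involute (d : Module.Dual R M) (x : CliffordAlgebra Q) :
    contractLeft d (involute x) = -involute (contractLeft d x) := by
  induction x using CliffordAlgebra.left_induction with
  | algebraMap r => simp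
  | add a b ha hb => simp only [map_add, ha, hb, neg_add]
  | ι_mul x v hx =>
    simp only [map_mul, involute_ι, neg_mul, map_neg, contractLeft_ι_mul, hx, map_sub, map_smul,
      mul_neg, sub_neg_eq_add]

theorem changeForm_involute {B : LinearMap.BilinForm R M} (h : B.toQuadraticMap = Q' - Q)
    (x : CliffordAlgebra Q) : changeForm h (involute x) = involute (changeForm h x) := by
  induction x using CliffordAlgebra.left_induction with
  | algebraMap r => simp
  | add a b ha hb => simp only [map_add, ha, hb]
  | ι_mul x v hx =>
    simp only [map_mul, involute_ι, neg_mul, map_neg, changeForm_ι_mul, hx, contractLeft_involute,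
      map_sub]
    abel

theorem contractLeft_mem_range_ι_pow (d : Module.Dual R M) {i : ℕ} {x : CliffordAlgebra Q}
    (hx : x ∈ LinearMap.range (ι Q) ^ (i + 1)) :
    contractLeft d x ∈ LinearMap.range (ι Q) ^ i := by
  induction i generalizing x with
  | zero =>
    rw [zero_add, pow_one] at hx
    obtain ⟨v, rfl⟩ := hx
    rw [contractLeft_ι, pow_zero]
    exact Submodule.algebraMap_mem _
  | succ i ih =>
    rw [pow_succ'] at hx
    induction hx using Submodule.mul_induction_on' with
    | mem_mul_mem _ hv y hy =>
      obtain ⟨v, rfl⟩ := hv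
      rw [contractLeft_ι_mul]
      refine Submodule.sub_mem _ (Submodule.smul_mem _ _ hy) ?_
      rw [pow_succ']
      exact Submodule.mul_mem_mul ⟨v, rfl⟩ (ih hy)
    | add x _ y _ hx hy =>
      rw [map_add]
      exact Submodule.add_mem _ hx hy

theorem involute_eq_of_mem_range_ι_pow {i : ℕ} {x : CliffordAlgebra Q}
    (hx : x ∈ LinearMap.range (ι Q) ^ i) : involute x = (-1 : R) ^ i • x := by
  induction hx using Submodule.pow_induction_on_left' with
  | algebraMap r => simp
  | add x y i _ _ hx hy => rw [map_add, hx, hy, smul_add]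
  | mem_mul _ hv i x _ hx =>
    obtain ⟨v, rfl⟩ := hv
    rw [map_mul, involute_ι, hx, mul_smul_comm, neg_mul, smul_neg, pow_succ, mul_neg_one, neg_smul]

theorem involute_pow_ι (m : ℕ) (v : M) :
    (involute ^ m : CliffordAlgebra Q →ₐ[R] CliffordAlgebra Q) (ι Q v) = (-1 : R) ^ m • ι Q v := by
  induction m with
  | zero => simp
  | succ m ih =>
    rw [pow_succ, AlgHom.mul_apply, involute_ι, map_neg, ih, pow_succ, mul_neg_one, neg_smul]

theorem involute_pow_injective (m : ℕ) :
    Function.Injective (involute ^ m : CliffordAlgebra Q →ₐ[R] CliffordAlgebra Q) := by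
  rw [AlgHom.coe_pow]
  exact involute_involutive.injective.iterate m

theorem involute_eq_or_eq_neg_of_mem_evenOdd {i : ZMod 2} {x : CliffordAlgebra Q}
    (hx : x ∈ evenOdd Q i) : involute x = x ∨ involute x = -x := by
  fin_cases i
  · exact Or.inl (involute_eq_of_mem_even hx)
  · exact Or.inr (involute_eq_of_mem_odd hx)

theorem involute_pow_eq_or_eq_neg_of_mem_evenOdd (m : ℕ) {i : ZMod 2} {x : CliffordAlgebra Q}
    (hx : x ∈ evenOdd Q i) :
    (involute ^ m : CliffordAlgebra Q →ₐ[R] CliffordAlgebra Q) x = x ∨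
      (involute ^ m : CliffordAlgebra Q →ₐ[R] CliffordAlgebra Q) x = -x := by
  induction m with
  | zero => exact Or.inl rfl
  | succ m ih =>
    rw [pow_succ, AlgHom.mul_apply]
    rcases involute_eq_or_eq_neg_of_mem_evenOdd hx with h | h <;> rw [h]
    · exact ih
    · rw [map_neg, neg_inj, neg_eq_iff_eq_neg]
      exact ih.symm

end Contraction

section ExteriorProjection

variable {R M : Type*} [CommRing R] [AddCommGroup M] [Module R M] {n : ℕ}

/-- The projection of the exterior algebra onto its component of degree `n`. -/
noncomputable def exteriorProj (R M : Type*) [CommRing R] [AddCommGroup M] [Module R M] (n : ℕ) :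
    ExteriorAlgebra R M →ₗ[R] ⋀[R]^n M :=
  DirectSum.component R ℕ (fun i : ℕ => ⋀[R]^i M) n ∘ₗ
    (DirectSum.decomposeLinearEquiv (fun i : ℕ => ⋀[R]^i M)).toLinearMap

theorem coe_exteriorProj_of_mem {x : ExteriorAlgebra R M} (hx : x ∈ ⋀[R]^n M) :
    (exteriorProj R M n x : ExteriorAlgebra R M) = x :=
  DirectSum.decompose_of_mem_same (fun i : ℕ => ⋀[R]^i M) hx

theorem exteriorProj_of_mem_of_ne {m : ℕ} {x : ExteriorAlgebra R M} (hx : x ∈ ⋀[R]^m M)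
    (h : m ≠ n) : exteriorProj R M n x = 0 :=
  Subtype.ext (DirectSum.decompose_of_mem_ne (fun i : ℕ => ⋀[R]^i M) hx h)

theorem exteriorProj_involute (x : ExteriorAlgebra R M) :
    exteriorProj R M n (involute x) = (-1 : R) ^ n • exteriorProj R M n x := by
  induction x using DirectSum.Decomposition.inductionOn (fun i : ℕ => ⋀[R]^i M) with
  | zero => simp only [map_zero, smul_zero]
  | @homogeneous i x =>
    rw [involute_eq_of_mem_range_ι_pow x.2, map_smul]
    obtain rfl | hi := eq_or_ne i n
    · rfl
    · rw [exteriorProj_of_mem_of_ne x.2 hi, smul_zero, smul_zero]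
  | add x y hx hy => rw [map_add, map_add, map_add, hx, hy, smul_add]

theorem eq_zero_of_mem_exteriorPower_of_lt (b : Module.Basis (Fin n) R M) {i : ℕ} (hi : n < i)
    {x : ExteriorAlgebra R M} (hx : x ∈ ⋀[R]^i M) : x = 0 := by
  have : IsEmpty (Set.powersetCard (Fin n) i) :=
    ⟨fun s => hi.not_ge (s.2 ▸ card_finset_fin_le s.1)⟩
  have : Subsingleton (⋀[R]^i M) := (b.exteriorPower i).repr.toEquiv.subsingleton
  exact congrArg Subtype.val (Subsingleton.elim (⟨x, hx⟩ : ⋀[R]^i M) 0)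

theorem exteriorProj_contractLeft (b : Module.Basis (Fin n) R M) (d : Module.Dual R M)
    (x : ExteriorAlgebra R M) : exteriorProj R M n (contractLeft d x) = 0 := by
  induction x using DirectSum.Decomposition.inductionOn (fun i : ℕ => ⋀[R]^i M) with
  | zero => simp only [map_zero]
  | add x y hx hy => rw [map_add, map_add, hx, hy, add_zero]
  | @homogeneous i x =>
    obtain ⟨x, hx⟩ := x
    change exteriorProj R M n (contractLeft d x) = 0
    cases i with
    | zero =>
      obtain ⟨r, rfl⟩ := Submodule.mem_one.mp hx
      rw [contractLeft_algebraMap, map_zero]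
    | succ i =>
      obtain rfl | hi := eq_or_ne i n
      · rw [eq_zero_of_mem_exteriorPower_of_lt b i.lt_succ_self hx, map_zero, map_zero]
      · exact exteriorProj_of_mem_of_ne (contractLeft_mem_range_ι_pow d hx) hi

theorem basis_exteriorAlgebra_mem {I : Type*} [LinearOrder I] (b : Module.Basis I R M)
    (s : Finset I) : b.ExteriorAlgebra s ∈ ⋀[R]^s.card M := by
  rw [ExteriorAlgebra.basis_eq_coe_basis b (⟨s, rfl⟩ : Set.powersetCard I s.card)]
  exact Subtype.property _

theorem exteriorProj_basis_compl_mul_basis_of_ne (b : Module.Basis (Fin n) R M)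
    {s t : Finset (Fin n)} (hts : t ≠ s) :
    exteriorProj R M n (b.ExteriorAlgebra sᶜ * b.ExteriorAlgebra t) = 0 := by
  by_cases hd : Disjoint sᶜ t
  · have hsub : t ⊆ s := by rwa [← compl_compl s, Finset.subset_compl_iff_disjoint_left]
    have hlt : t.card < s.card := Finset.card_lt_card (hsub.ssubset_of_ne hts)
    have hcard : sᶜ.card + s.card = n := by rw [Finset.card_compl_add_card, Fintype.card_fin]
    exact exteriorProj_of_mem_of_ne (SetLike.mul_mem_graded (basis_exteriorAlgebra_mem b sᶜ)
      (basis_exteriorAlgebra_mem b t)) (by omega)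
  · rw [ExteriorAlgebra.basis_mul_of_not_disjoint b (⟨sᶜ, rfl⟩ : Set.powersetCard _ sᶜ.card)
      (⟨t, rfl⟩ : Set.powersetCard _ t.card) hd, map_zero]

theorem eq_zero_of_smul_exteriorProj_basis_compl_mul_basis (b : Module.Basis (Fin n) R M)
    (s : Finset (Fin n)) {c : R}
    (hc : c • exteriorProj R M n (b.ExteriorAlgebra sᶜ * b.ExteriorAlgebra s) = 0) : c = 0 := by
  have hmem : b.ExteriorAlgebra sᶜ * b.ExteriorAlgebra s ∈ ⋀[R]^n M := by
    have := SetLike.mul_mem_graded (basis_exteriorAlgebra_mem b sᶜ) (basis_exteriorAlgebra_mem b s)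
    rwa [Finset.card_compl_add_card, Fintype.card_fin] at this
  have hd : Disjoint sᶜ s := disjoint_compl_left
  have hprod : c • (b.ExteriorAlgebra sᶜ * b.ExteriorAlgebra s) = 0 := by
    rw [← coe_exteriorProj_of_mem hmem, ← Submodule.coe_smul, hc, Submodule.coe_zero]
  rw [ExteriorAlgebra.basis_mul_of_disjoint b (⟨sᶜ, rfl⟩ : Set.powersetCard _ sᶜ.card)
    (⟨s, rfl⟩ : Set.powersetCard _ s.card) hd, smul_comm, smul_eq_zero_iff_eq] at hprod
  have hrepr := congrArg b.ExteriorAlgebra.repr hprod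
  rwa [map_smul, Module.Basis.repr_self, Finsupp.smul_single_one, map_zero,
    Finsupp.single_eq_zero] at hrepr

theorem eq_zero_of_forall_exteriorProj_mul_eq_zero (b : Module.Basis (Fin n) R M)
    {x : ExteriorAlgebra R M} (h : ∀ y, exteriorProj R M n (y * x) = 0) : x = 0 := by
  rw [← b.ExteriorAlgebra.forall_coord_eq_zero_iff]
  intro s
  apply eq_zero_of_smul_exteriorProj_basis_compl_mul_basis b s
  calc b.ExteriorAlgebra.repr x s •
        exteriorProj R M n (b.ExteriorAlgebra sᶜ * b.ExteriorAlgebra s)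
      = ∑ t, b.ExteriorAlgebra.repr x t •
          exteriorProj R M n (b.ExteriorAlgebra sᶜ * b.ExteriorAlgebra t) :=
        Eq.symm <| Fintype.sum_eq_single s fun t hts => by
          rw [exteriorProj_basis_compl_mul_basis_of_ne b hts, smul_zero]
    _ = exteriorProj R M n (b.ExteriorAlgebra sᶜ * x) := by
        conv_rhs => rw [← b.ExteriorAlgebra.sum_repr x]
        simp only [Finset.mul_sum, map_sum, mul_smul_comm, map_smul]
    _ = 0 := h _

end ExteriorProjection

section TopSymbol

variable {R M : Type*} [CommRing R] [Invertible (2 : R)] [AddCommGroup M] [Module R M]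
  (Q : QuadraticForm R M) {n : ℕ}

/-- The degree `n` component of the symbol map `Cl(Q) ≅ Λ•M`. For `M` free of rank `n` it is the
functional `λ`. -/
noncomputable def symbolProj (n : ℕ) : CliffordAlgebra Q →ₗ[R] ⋀[R]^n M :=
  exteriorProj R M n ∘ₗ (equivExterior Q).toLinearMap

theorem symbolProj_involute (x : CliffordAlgebra Q) :
    symbolProj Q n (involute x) = (-1 : R) ^ n • symbolProj Q n x :=
  (congrArg (exteriorProj R M n) (changeForm_involute changeForm.associated_neg_proof x)).trans
    (exteriorProj_involute _)

theorem symbolProj_contractLeft (b : Module.Basis (Fin n) R M) (d : Module.Dual R M)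
    (x : CliffordAlgebra Q) : symbolProj Q n (contractLeft d x) = 0 :=
  (congrArg (exteriorProj R M n)
    (changeForm_contractLeft changeForm.associated_neg_proof d x)).trans
    (exteriorProj_contractLeft b d _)

theorem symbolProj_ι_mul (b : Module.Basis (Fin n) R M) (v : M) (x : CliffordAlgebra Q) :
    symbolProj Q n (ι Q v * x) = (-1 : R) ^ (n + 1) • symbolProj Q n (x * ι Q v) := by
  have hinv : involute x * ι Q v = -involute (x * ι Q v) := by
    rw [map_mul, involute_ι, mul_neg, neg_neg]
  rw [ι_mul_eq_involute_mul_ι_add_contractLeft, map_add, symbolProj_contractLeft Q b, add_zero,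
    hinv, map_neg, symbolProj_involute, pow_succ, mul_neg_one]
  exact (neg_smul _ _).symm

theorem symbolProj_mul_comm (b : Module.Basis (Fin n) R M) (x y : CliffordAlgebra Q) :
    symbolProj Q n (x * y) =
      symbolProj Q n (y * (involute ^ (n + 1) : CliffordAlgebra Q →ₐ[R] CliffordAlgebra Q) x) := by
  induction x using CliffordAlgebra.left_induction generalizing y with
  | algebraMap r => rw [AlgHom.commutes, Algebra.commutes]
  | add x₁ x₂ h₁ h₂ => rw [add_mul, map_add, h₁, h₂, map_add, mul_add, map_add]
  | ι_mul x v hx =>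
    rw [mul_assoc, symbolProj_ι_mul Q b, mul_assoc, hx, map_mul (involute ^ (n + 1)),
      involute_pow_ι, smul_mul_assoc, mul_smul_comm, map_smul, mul_assoc]

/-- The pairing `(x, y) ↦ λ (x * y)` of the Clifford algebra with itself, where `λ` is
`symbolProj Q n`. -/
noncomputable def symbolPairing (n : ℕ) :
    CliffordAlgebra Q →ₗ[R] CliffordAlgebra Q →ₗ[R] ⋀[R]^n M :=
  (LinearMap.mul R (CliffordAlgebra Q)).compr₂ (symbolProj Q n)

theorem symbolPairing_apply (x y : CliffordAlgebra Q) :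
    symbolPairing Q n x y = symbolProj Q n (x * y) := rfl

theorem mul_mem_ker_flip_symbolPairing (z : CliffordAlgebra Q) {x : CliffordAlgebra Q}
    (hx : x ∈ LinearMap.ker (symbolPairing Q n).flip) :
    z * x ∈ LinearMap.ker (symbolPairing Q n).flip := by
  refine LinearMap.mem_ker.mpr (LinearMap.ext fun y => ?_)
  rw [LinearMap.flip_apply, symbolPairing_apply, ← mul_assoc]
  exact LinearMap.congr_fun hx (y * z)

/-- `λ` kills the contraction of `involute y * x`, so by the Leibniz rule a contraction can be moved
from `x` to `y`. -/
theorem contractLeft_mem_ker_flip_symbolPairing (b : Module.Basis (Fin n) R M)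
    (d : Module.Dual R M) {x : CliffordAlgebra Q}
    (hx : x ∈ LinearMap.ker (symbolPairing Q n).flip) :
    contractLeft d x ∈ LinearMap.ker (symbolPairing Q n).flip := by
  refine LinearMap.mem_ker.mpr (LinearMap.ext fun y => ?_)
  have hxy : symbolProj Q n (contractLeft d (involute y) * x) = 0 := LinearMap.congr_fun hx _
  have hleibniz := symbolProj_contractLeft Q b d (involute y * x)
  rwa [contractLeft_mul, map_add, hxy, zero_add, involute_involute] at hleibniz

theorem equivExterior_symm_mul_mem_ker_flip_symbolPairing (b : Module.Basis (Fin n) R M)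
    (Y : ExteriorAlgebra R M) {X : ExteriorAlgebra R M}
    (hX : (equivExterior Q).symm X ∈ LinearMap.ker (symbolPairing Q n).flip) :
    (equivExterior Q).symm (Y * X) ∈ LinearMap.ker (symbolPairing Q n).flip := by
  induction Y using CliffordAlgebra.left_induction with
  | algebraMap r =>
    rw [← Algebra.smul_def, map_smul]
    exact Submodule.smul_mem _ r hX
  | add Y₁ Y₂ h₁ h₂ =>
    rw [add_mul, map_add]
    exact Submodule.add_mem _ h₁ h₂
  | ι_mul Y v hY =>
    have hmul : (equivExterior Q).symm (ι 0 v * (Y * X)) =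
        ι Q v * (equivExterior Q).symm (Y * X) -
          contractLeft (-QuadraticMap.associated (R := R) (-Q) v)
            ((equivExterior Q).symm (Y * X)) :=
      changeForm_ι_mul (changeForm.neg_proof changeForm.associated_neg_proof) v (Y * X)
    rw [mul_assoc, hmul]
    exact Submodule.sub_mem _ (mul_mem_ker_flip_symbolPairing Q _ hY)
      (contractLeft_mem_ker_flip_symbolPairing Q b _ hY)

theorem symbolPairing_separatingRight (b : Module.Basis (Fin n) R M) :
    (symbolPairing Q n).SeparatingRight := by
  rw [LinearMap.separatingRight_iff_flip_ker_eq_bot, eq_bot_iff]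
  intro x hx
  rw [← (equivExterior Q).symm_apply_apply x] at hx
  rw [Submodule.mem_bot, ← (equivExterior Q).map_eq_zero_iff]
  refine eq_zero_of_forall_exteriorProj_mul_eq_zero b fun Y => ?_
  have hY := LinearMap.congr_fun (equivExterior_symm_mul_mem_ker_flip_symbolPairing Q b Y hx) 1
  rwa [LinearMap.flip_apply, symbolPairing_apply, one_mul, symbolProj, LinearMap.comp_apply,
    LinearEquiv.coe_coe, LinearEquiv.apply_symm_apply] at hY

theorem symbolPairing_separatingLeft (b : Module.Basis (Fin n) R M) :
    (symbolPairing Q n).SeparatingLeft := by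
  intro x hx
  apply involute_pow_injective (n + 1)
  rw [map_zero]
  refine symbolPairing_separatingRight Q b _ fun y => ?_
  rw [symbolPairing_apply, ← symbolProj_mul_comm Q b]
  exact hx y

theorem symbolPairing_mul_right_eq_zero_iff (b : Module.Basis (Fin n) R M) {i : ZMod 2}
    {ω : CliffordAlgebra Q} (hω : ω ∈ evenOdd Q i) (x y : CliffordAlgebra Q) :
    symbolPairing Q n x (y * ω) = 0 ↔ symbolPairing Q n (ω * x) y = 0 := by
  rw [symbolPairing_apply, symbolPairing_apply, mul_assoc ω, symbolProj_mul_comm Q b ω, ← mul_assoc]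
  rcases involute_pow_eq_or_eq_neg_of_mem_evenOdd (n + 1) hω with h | h <;> rw [h]
  rw [mul_neg, map_neg, neg_eq_zero]

theorem forall_symbolPairing_mul_right_eq_zero_iff (b : Module.Basis (Fin n) R M) {i : ZMod 2}
    {ω : CliffordAlgebra Q} (hω : ω ∈ evenOdd Q i) (x : CliffordAlgebra Q) :
    (∀ y, symbolPairing Q n x (y * ω) = 0) ↔ ω * x = 0 := by
  simp only [symbolPairing_mul_right_eq_zero_iff Q b hω]
  exact ⟨symbolPairing_separatingLeft Q b _, fun h y => by rw [h, map_zero, LinearMap.zero_apply]⟩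

end TopSymbol

section VectorSpace

variable {k : Type*} [Field k]

theorem surjective_of_separatingLeft {A T : Type*} [AddCommGroup A] [Module k A]
    [FiniteDimensional k A] [AddCommGroup T] [Module k T] (hT : Module.finrank k T = 1)
    {f : A →ₗ[k] A →ₗ[k] T} (hf : f.SeparatingLeft) : Function.Surjective f := by
  have : FiniteDimensional k T := Module.finite_of_finrank_eq_succ hT
  have hdim : Module.finrank k A = Module.finrank k (A →ₗ[k] T) := by
    rw [Module.finrank_linearMap, hT, mul_one]
  rw [← LinearMap.injective_iff_surjective_of_finrank_eq_finrank hdim, ← LinearMap.ker_eq_bot]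
  exact LinearMap.separatingLeft_iff_ker_eq_bot.mp hf

theorem domRestrict₂_surjective {A B T : Type*} [AddCommGroup A] [Module k A] [AddCommGroup B]
    [Module k B] [AddCommGroup T] [Module k T] {f : A →ₗ[k] B →ₗ[k] T}
    (hf : Function.Surjective f) (L : Submodule k B) : Function.Surjective (f.domRestrict₂ L) := by
  intro g
  obtain ⟨G, hG⟩ := LinearMap.exists_extend g
  obtain ⟨x, rfl⟩ := hf G
  exact ⟨x, hG⟩

variable [Invertible (2 : k)] {V : Type*} [AddCommGroup V] [Module k V] [FiniteDimensional k V]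
  (Q : QuadraticForm k V)

theorem finiteDimensional_cliffordAlgebra : FiniteDimensional k (CliffordAlgebra Q) :=
  Module.Finite.of_basis ((Module.finBasis k V).ExteriorAlgebra.map (equivExterior Q).symm)

theorem symbolPairing_surjective :
    Function.Surjective (symbolPairing Q (Module.finrank k V)) := by
  have := finiteDimensional_cliffordAlgebra Q
  have htop : Module.finrank k (⋀[k]^(Module.finrank k V) V) = 1 := by
    rw [exteriorPower.finrank_eq, Nat.choose_self]
  exact surjective_of_separatingLeft htop
    (symbolPairing_separatingLeft Q (Module.finBasis k V))

theorem ker_domRestrict₂_symbolPairing {i : ZMod 2} {ω : CliffordAlgebra Q}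
    (hω : ω ∈ evenOdd Q i) :
    LinearMap.ker ((symbolPairing Q (Module.finrank k V)).domRestrict₂
      (LinearMap.range (LinearMap.mulRight k ω))) = LinearMap.ker (LinearMap.mulLeft k ω) := by
  ext ξ
  rw [LinearMap.mem_ker, LinearMap.mem_ker, LinearMap.mulLeft_apply,
    ← forall_symbolPairing_mul_right_eq_zero_iff Q (Module.finBasis k V) hω]
  constructor
  · exact fun h x => LinearMap.congr_fun h ⟨x * ω, x, rfl⟩
  · intro h
    ext ⟨_, x, rfl⟩ : 1
    exact h x

end VectorSpace

theorem span_setOf_eq_mul_eq_range_mulRight {R A : Type*} [CommSemiring R] [Semiring A]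
    [Algebra R A] (a : A) :
    Submodule.span R {y | ∃ x : A, y = x * a} = LinearMap.range (LinearMap.mulRight R a) := by
  have hset : {y | ∃ x : A, y = x * a} = LinearMap.range (LinearMap.mulRight R a) :=
    Set.ext fun y => exists_congr fun x => eq_comm
  rw [hset, Submodule.span_eq]

theorem prod_ofFn_ι_mem_evenOdd {R M : Type*} [CommRing R] [AddCommGroup M] [Module R M]
    (Q : QuadraticForm R M) {r : ℕ} (w : Fin r → M) :
    (List.ofFn fun i => ι Q (w i)).prod ∈ evenOdd Q (List.ofFn fun _ : Fin r => 1).sum :=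
  SetLike.list_prod_ofFn_mem_graded _ _ fun j => ι_mem_evenOdd_one Q (w j)

end CliffordDuality

open CliffordDuality

theorem clifford_left_ideal_duality_general
    {k V : Type*} [Field k] [Invertible (2 : k)]
    [AddCommGroup V] [Module k V] [FiniteDimensional k V]
    (Q : QuadraticForm k V) {i : ZMod 2} {ω : CliffordAlgebra Q} (hω : ω ∈ evenOdd Q i)
    (L : Submodule k (CliffordAlgebra Q))
    (hL : L = Submodule.span k {y | ∃ x : CliffordAlgebra Q, y = x * ω}) :
    (∀ g : ↥L →ₗ[k] ↥(⋀[k]^(Module.finrank k V) V),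
      ∃ ξ : CliffordAlgebra Q, ∀ y : ↥L,
        (DirectSum.decompose (fun i : ℕ => ⋀[k]^i V)
            (equivExterior Q (ξ * (y : CliffordAlgebra Q)))) (Module.finrank k V) = g y) ∧
    (∀ ξ : CliffordAlgebra Q,
      (∀ y : ↥L,
        (DirectSum.decompose (fun i : ℕ => ⋀[k]^i V)
            (equivExterior Q (ξ * (y : CliffordAlgebra Q)))) (Module.finrank k V) = 0) ↔
      ω * ξ = 0) ∧
    Nonempty ((CliffordAlgebra Q ⧸ LinearMap.ker (LinearMap.mulLeft k ω)) ≃ₗ[k]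
      (↥L →ₗ[k] ↥(⋀[k]^(Module.finrank k V) V))) := by
  rw [span_setOf_eq_mul_eq_range_mulRight] at hL
  subst hL
  let Φ := (symbolPairing Q (Module.finrank k V)).domRestrict₂
    (LinearMap.range (LinearMap.mulRight k ω))
  have hsurj : Function.Surjective Φ := domRestrict₂_surjective (symbolPairing_surjective Q) _
  have hker : LinearMap.ker Φ = LinearMap.ker (LinearMap.mulLeft k ω) :=
    ker_domRestrict₂_symbolPairing Q hω
  refine ⟨fun g => ?_, fun ξ => ?_, ?_⟩
  · obtain ⟨ξ, rfl⟩ := hsurj g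
    exact ⟨ξ, fun y => rfl⟩
  · exact LinearMap.ext_iff.symm.trans (SetLike.ext_iff.mp hker ξ)
  · rw [← hker]
    -- Without this instance, unifying the additive structures on the `Hom` space times out.
    let : AddCommGroup (⋀[k]^(Module.finrank k V) V) := Submodule.addCommGroup _
    exact ⟨Φ.quotKerEquivOfSurjective hsurj⟩

/-- Let `n = dim V`, `W` an isotropic subspace with ordered basis
`w₁, …, w_r`, `ω = ι w₁ ⋯ ι w_r`, and let `λ` be the canonical linear isomorphism
`Cl(q) ≅ Λ•V` (existing since `2` is invertible) followed by the projection to the top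
exterior power `ΛⁿV`. Then `Φ(ξ)(y) = λ(ξ·y)` defines a surjection of `Cl(q)` onto
`Hom_k(Cl(q)·ω, ΛⁿV)` whose kernel is exactly `{ξ : ω·ξ = 0}`; consequently it induces
a linear isomorphism `Cl(q)/{ξ : ω·ξ = 0} ≅ Hom_k(Cl(q)·ω, ΛⁿV)`. -/
theorem clifford_left_ideal_duality
    {k V : Type*} [Field k] [Invertible (2 : k)]
    [AddCommGroup V] [Module k V] [FiniteDimensional k V]
    (Q : QuadraticForm k V) (W : Submodule k V)
    (hiso : ∀ u ∈ W, Q u = 0)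
    (r : ℕ) (w : Fin r → V)
    (hli : LinearIndependent k w)
    (hspan : Submodule.span k (Set.range w) = W)
    (ω : CliffordAlgebra Q)
    (hω : ω = (List.ofFn fun i => ι Q (w i)).prod)
    (L : Submodule k (CliffordAlgebra Q))
    (hL : L = Submodule.span k {y | ∃ x : CliffordAlgebra Q, y = x * ω}) :
    (∀ g : ↥L →ₗ[k] ↥(⋀[k]^(Module.finrank k V) V),
      ∃ ξ : CliffordAlgebra Q, ∀ y : ↥L,
        (DirectSum.decompose (fun i : ℕ => ⋀[k]^i V)
            (equivExterior Q (ξ * (y : CliffordAlgebra Q)))) (Module.finrank k V) = g y) ∧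
    (∀ ξ : CliffordAlgebra Q,
      (∀ y : ↥L,
        (DirectSum.decompose (fun i : ℕ => ⋀[k]^i V)
            (equivExterior Q (ξ * (y : CliffordAlgebra Q)))) (Module.finrank k V) = 0) ↔
      ω * ξ = 0) ∧
    Nonempty ((CliffordAlgebra Q ⧸ LinearMap.ker (LinearMap.mulLeft k ω)) ≃ₗ[k]
      (↥L →ₗ[k] ↥(⋀[k]^(Module.finrank k V) V))) := by
  subst hω
  exact clifford_left_ideal_duality_general Q (prod_ofFn_ι_mem_evenOdd Q w) L hL
end

section
/- Suppose dim_k V = 4 and the radical rad(b_q) = {v ∈ V : b_q(v,w) = 0 for all w ∈ V} of the polar form of q has dimension at most 1 (i.e. q has corank at most 1). Then the center of the even Clifford algebra Cl(q)₀ is a 2-dimensional k-vector space. (This is the pointwise computation underlying Lemma 3.1(a): for a quadric surface bundle with simple degeneration, the center of the even Clifford algebra B₀ is locally free of rank 2, so the discriminant cover is a double cover ramified along the first degeneration locus.) -/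
set_option synthInstance.maxHeartbeats 1000000
set_option maxHeartbeats 1000000
open CliffordAlgebra

/-!
Fix an orthogonal basis `e₁, …, eₙ` of `V` with `n` even. The ordered products `e_s`, for `s` a set
of indices, form a basis of `Cl(q)`, and `eᵢ` commutes with `e_s` up to the sign `(-1)^|s \ {i}|`.
Hence `e₁ ⋯ eₙ` anticommutes with every vector, so it is central in `Cl(q)₀`. Conversely, if `i ∈ s`
and `j ∉ s`, then `eᵢeⱼ` anticommutes with `e_s`, and comparing coefficients in
`eᵢeⱼ x = x eᵢeⱼ` shows that `q(eᵢ)` kills the coefficient of `e_s` in `x`. For `x` even only sets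
`s` of even size matter; if such an `s` is neither empty nor everything, it contains two indices,
and corank at most one makes `q(eᵢ) ≠ 0` for one of them. So `1` and `e₁ ⋯ eₙ` span the center.
-/

open Finset Module
open scoped symmDiff

section Monomial

variable {R M I : Type*} [CommRing R] [AddCommGroup M] [Module R M] [LinearOrder I]

/-- The ordered product `e_s = v i₁ ⋯ v iₘ` in the Clifford algebra of `Q`, where `i₁ < ⋯ < iₘ` are
the elements of `s`. When `v` is an orthogonal basis, these are the standard basis of the Clifford
algebra. -/
def cliffordMonomial (Q : QuadraticForm R M) (v : I → M) (s : Finset I) : CliffordAlgebra Q :=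
  ((s.sort (· ≤ ·)).map fun i => ι Q (v i)).prod

variable {Q : QuadraticForm R M} {v : I → M} {s : Finset I} {i j : I}

@[simp]
theorem cliffordMonomial_empty : cliffordMonomial Q v ∅ = 1 := by
  simp [cliffordMonomial]

theorem cliffordMonomial_insert_of_lt (h : ∀ j ∈ s, i < j) :
    cliffordMonomial Q v (insert i s) = ι Q (v i) * cliffordMonomial Q v s := by
  rw [cliffordMonomial, sort_insert _ (fun j hj => (h j hj).le) fun hi => (h i hi).false,
    List.map_cons, List.prod_cons, cliffordMonomial]

theorem cliffordMonomial_mem_evenOdd (s : Finset I) :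
    cliffordMonomial Q v s ∈ evenOdd Q (#s : ZMod 2) := by
  induction s using Finset.induction_on_min with
  | empty => simpa using SetLike.one_mem_graded (evenOdd Q)
  | insert a s ha ih =>
    rw [cliffordMonomial_insert_of_lt ha, card_insert_of_notMem fun h => (ha a h).false,
      Nat.cast_succ, add_comm]
    exact SetLike.mul_mem_graded (ι_mem_evenOdd_one Q _) ih

theorem cliffordMonomial_mem_even (hs : Even #s) : cliffordMonomial Q v s ∈ even Q := by
  have h := cliffordMonomial_mem_evenOdd (Q := Q) (v := v) s
  rwa [(ZMod.natCast_eq_zero_iff_even).2 hs] at h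

theorem involute_cliffordMonomial (s : Finset I) :
    involute (cliffordMonomial Q v s) = (-1 : R) ^ #s • cliffordMonomial Q v s := by
  induction s using Finset.induction_on_min with
  | empty => simp
  | insert a s ha ih =>
    rw [cliffordMonomial_insert_of_lt ha, card_insert_of_notMem fun h => (ha a h).false,
      map_mul, involute_ι, ih, pow_succ, mul_neg_one, mul_smul_comm, neg_mul, smul_neg, neg_smul]

theorem cliffordMonomial_mul_ι (hv : Pairwise fun i j => Q.IsOrtho (v i) (v j))
    (s : Finset I) (i : I) :
    cliffordMonomial Q v s * ι Q (v i) =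
      (-1 : R) ^ #(s.erase i) • (ι Q (v i) * cliffordMonomial Q v s) := by
  induction s using Finset.induction_on_min with
  | empty => simp
  | insert a s ha ih =>
    have has : a ∉ s := fun h => (ha a h).false
    rw [cliffordMonomial_insert_of_lt ha]
    obtain rfl | hai := eq_or_ne a i
    · rw [erase_eq_of_notMem has] at ih
      rw [erase_insert has, mul_assoc, ih, mul_smul_comm]
    · rw [erase_insert_of_ne hai, card_insert_of_notMem fun h => has (mem_of_mem_erase h),
        mul_assoc, ih, mul_smul_comm, ← mul_assoc, ι_mul_ι_comm_of_isOrtho (hv hai), neg_mul,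
        mul_assoc, pow_succ, mul_neg_one, neg_smul, smul_neg]

theorem cliffordMonomial_mul_ι_mul_ι (hv : Pairwise fun i j => Q.IsOrtho (v i) (v j))
    (s : Finset I) (i j : I) :
    cliffordMonomial Q v s * (ι Q (v i) * ι Q (v j)) =
      (-1 : R) ^ (#(s.erase i) + #(s.erase j)) •
        (ι Q (v i) * ι Q (v j) * cliffordMonomial Q v s) := by
  rw [← mul_assoc, cliffordMonomial_mul_ι hv, smul_mul_assoc, mul_assoc,
    cliffordMonomial_mul_ι hv, mul_smul_comm, smul_smul, ← pow_add, mul_assoc]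

theorem cliffordMonomial_mul_ι_mul_ι_of_mem_of_notMem
    (hv : Pairwise fun i j => Q.IsOrtho (v i) (v j)) (hi : i ∈ s) (hj : j ∉ s) :
    cliffordMonomial Q v s * (ι Q (v i) * ι Q (v j)) =
      -(ι Q (v i) * ι Q (v j) * cliffordMonomial Q v s) := by
  have hodd : Odd (#(s.erase i) + #(s.erase j)) := by
    rw [erase_eq_of_notMem hj, ← card_erase_add_one hi, ← add_assoc]
    exact (Even.add_self _).add_one
  rw [cliffordMonomial_mul_ι_mul_ι hv, hodd.neg_one_pow, neg_one_smul]

theorem ι_mul_cliffordMonomial (hv : Pairwise fun i j => Q.IsOrtho (v i) (v j))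
    (i : I) (s : Finset I) :
    ι Q (v i) * cliffordMonomial Q v s =
      ((-1) ^ #{j ∈ s | j < i} * if i ∈ s then Q (v i) else 1) •
        cliffordMonomial Q v (s ∆ {i}) := by
  induction s using Finset.induction_on_min with
  | empty => rw [← bot_eq_empty, bot_symmDiff]; simp [cliffordMonomial]
  | insert a s ha ih =>
    have has : a ∉ s := fun h => (ha a h).false
    obtain hia | rfl | hai := lt_trichotomy i a
    · have hmin : ∀ j ∈ insert a s, i < j :=
        forall_mem_insert _ _ _ |>.2 ⟨hia, fun j hj => hia.trans (ha j hj)⟩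
      have hi : i ∉ insert a s := fun h => (hmin i h).false
      have hdiff : insert a s ∆ {i} = insert i (insert a s) := by grind [mem_symmDiff]
      rw [filter_false_of_mem fun j hj => (hmin j hj).not_gt, if_neg hi, hdiff,
        cliffordMonomial_insert_of_lt hmin, card_empty, pow_zero, one_mul, one_smul]
    · have hdiff : insert i s ∆ {i} = s := by grind [mem_symmDiff]
      have hmin : ∀ j ∈ insert i s, ¬j < i :=
        forall_mem_insert _ _ _ |>.2 ⟨lt_irrefl i, fun j hj => (ha j hj).not_gt⟩
      rw [filter_false_of_mem hmin, if_pos (mem_insert_self i s), hdiff,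
        cliffordMonomial_insert_of_lt ha, ← mul_assoc, ι_sq_scalar, ← Algebra.smul_def, card_empty,
        pow_zero, one_mul]
    · have hmin : ∀ j ∈ s ∆ {i}, a < j := by grind [mem_symmDiff]
      have hdiff : insert a s ∆ {i} = insert a (s ∆ {i}) := by grind [mem_symmDiff]
      have hi : i ∈ insert a s ↔ i ∈ s := mem_insert.trans (or_iff_right hai.ne')
      rw [filter_insert, if_pos hai, card_insert_of_notMem fun h => has (mem_of_mem_filter a h),
        hdiff, cliffordMonomial_insert_of_lt hmin, cliffordMonomial_insert_of_lt ha, ← mul_assoc,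
        ι_mul_ι_comm_of_isOrtho (hv hai.ne'), neg_mul, mul_assoc, ih, mul_smul_comm, pow_succ,
        mul_neg_one, neg_mul, neg_smul]
      simp only [hi]

theorem span_range_cliffordMonomial (hv : Pairwise fun i j => Q.IsOrtho (v i) (v j))
    (hspan : Submodule.span R (Set.range v) = ⊤) :
    Submodule.span R (Set.range (cliffordMonomial Q v)) = ⊤ := by
  set S := Submodule.span R (Set.range (cliffordMonomial Q v))
  have monomial_mem (s : Finset I) : cliffordMonomial Q v s ∈ S := Submodule.subset_span ⟨s, rfl⟩
  have basis_mul_mem (i : I) : S ≤ S.comap (LinearMap.mulLeft R (ι Q (v i))) := by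
    refine Submodule.span_le.2 ?_
    rintro _ ⟨s, rfl⟩
    change ι Q (v i) * cliffordMonomial Q v s ∈ S
    rw [ι_mul_cliffordMonomial hv]
    exact S.smul_mem _ (monomial_mem _)
  have vector_mul_mem (x : CliffordAlgebra Q) (hx : x ∈ S) :
      ⊤ ≤ S.comap ((LinearMap.mulRight R x).comp (ι Q)) := by
    refine hspan.ge.trans (Submodule.span_le.2 ?_)
    rintro _ ⟨i, rfl⟩
    exact basis_mul_mem i hx
  refine eq_top_iff.2 fun x _ => ?_
  induction x using left_induction with
  | algebraMap r =>
    rw [Algebra.algebraMap_eq_smul_one, ← cliffordMonomial_empty (v := v)]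
    exact S.smul_mem r (monomial_mem ∅)
  | add x y hx hy => exact S.add_mem (hx trivial) (hy trivial)
  | ι_mul x m hx => exact vector_mul_mem x (hx trivial) (Submodule.mem_top (x := m))

theorem ι_mul_cliffordMonomial_univ [Fintype I] (hv : Pairwise fun i j => Q.IsOrtho (v i) (v j))
    (hspan : Submodule.span R (Set.range v) = ⊤) (hI : Even (Fintype.card I)) (m : M) :
    ι Q m * cliffordMonomial Q v univ = -(cliffordMonomial Q v univ * ι Q m) := by
  set w := cliffordMonomial Q v univ
  suffices h : LinearMap.mulRight R w ∘ₗ ι Q = -(LinearMap.mulLeft R w ∘ₗ ι Q) from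
    LinearMap.congr_fun h m
  refine LinearMap.ext_on_range hspan fun i => ?_
  have hodd : Odd #(univ.erase i) := by
    rw [card_erase_of_mem (mem_univ i), card_univ]
    exact Nat.Even.sub_odd (Fintype.card_pos_iff.2 ⟨i⟩) hI odd_one
  change ι Q (v i) * w = -(w * ι Q (v i))
  rw [cliffordMonomial_mul_ι hv, hodd.neg_one_pow, neg_one_smul, neg_neg]

end Monomial

theorem commute_of_mem_even_of_anticomm {R M : Type*} [CommRing R] [AddCommGroup M] [Module R M]
    {Q : QuadraticForm R M} {x w : CliffordAlgebra Q} (hx : x ∈ even Q)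
    (hw : ∀ m, ι Q m * w = -(w * ι Q m)) : Commute x w := by
  induction x, hx using even_induction with
  | algebraMap r => exact Algebra.commutes r w
  | add x y _ _ hx hy => exact hx.add_left hy
  | ι_mul_ι_mul m n x _ hx =>
    have hmn : Commute (ι Q m * ι Q n) w := by
      rw [commute_iff_eq, mul_assoc, hw n, mul_neg, ← mul_assoc, hw m, neg_mul, neg_neg, mul_assoc]
    exact hmn.mul_left hx

section Basis

variable {R M I : Type*} [CommRing R] [Nontrivial R] [Invertible (2 : R)] [AddCommGroup M]
  [Module R M] [LinearOrder I] [Fintype I] {Q : QuadraticForm R M} {b : Basis I R M}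

theorem finrank_cliffordAlgebra_eq_two_pow (Q : QuadraticForm R M) (b : Basis I R M) :
    finrank R (CliffordAlgebra Q) = 2 ^ Fintype.card I := by
  rw [(equivExterior Q).finrank_eq, finrank_eq_card_basis b.ExteriorAlgebra, Fintype.card_finset]

/-- The basis of the Clifford algebra of `Q` consisting of the ordered products of distinct elements
of the orthogonal basis `b`. -/
noncomputable def cliffordMonomialBasis (b : Basis I R M)
    (hb : Pairwise fun i j => Q.IsOrtho (b i) (b j)) :
    Basis (Finset I) R (CliffordAlgebra Q) :=
  basisOfTopLeSpanOfCardEqFinrank (cliffordMonomial Q b)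
    (span_range_cliffordMonomial hb b.span_eq).ge
    (by rw [Fintype.card_finset, finrank_cliffordAlgebra_eq_two_pow Q b])

theorem cliffordMonomialBasis_apply (hb : Pairwise fun i j => Q.IsOrtho (b i) (b j))
    (s : Finset I) : cliffordMonomialBasis b hb s = cliffordMonomial Q b s :=
  congr_fun (coe_basisOfTopLeSpanOfCardEqFinrank _ _ _) s

theorem repr_cliffordMonomialBasis_eq_zero_of_mem_even
    (hb : Pairwise fun i j => Q.IsOrtho (b i) (b j)) {x : CliffordAlgebra Q} (hx : x ∈ even Q)
    {s : Finset I} (hs : Odd #s) : (cliffordMonomialBasis b hb).repr x s = 0 := by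
  set B := cliffordMonomialBasis b hb
  have involute_basis (t : Finset I) : involute (B t) = (-1 : R) ^ #t • B t := by
    rw [cliffordMonomialBasis_apply, involute_cliffordMonomial]
  have coord_involute : B.coord s ∘ₗ involute.toLinearMap = -B.coord s := by
    refine B.ext fun t => ?_
    obtain rfl | hts := eq_or_ne t s
    · simp [involute_basis, hs.neg_one_pow]
    · simp [involute_basis, hts]
  have repr_eq_neg : B.repr x s = -B.repr x s := by
    simpa [involute_eq_of_mem_even hx] using LinearMap.congr_fun coord_involute x
  rwa [eq_neg_iff_add_eq_zero, ← two_mul, (isUnit_of_invertible 2).mul_right_eq_zero] at repr_eq_neg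

theorem mul_repr_cliffordMonomialBasis_eq_zero_of_commute
    (hb : Pairwise fun i j => Q.IsOrtho (b i) (b j)) {x : CliffordAlgebra Q} {i j : I}
    (hx : Commute (ι Q (b i) * ι Q (b j)) x) {s : Finset I} (hi : i ∈ s) (hj : j ∉ s) :
    Q (b i) * (cliffordMonomialBasis b hb).repr x s = 0 := by
  set B := cliffordMonomialBasis b hb
  set a := ι Q (b i) * ι Q (b j)
  let c (t : Finset I) : R := ((-1) ^ #{l ∈ t | l < j} * if j ∈ t then Q (b j) else 1) *
    ((-1) ^ #{l ∈ t ∆ {j} | l < i} * if i ∈ t ∆ {j} then Q (b i) else 1)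
  have a_mul_basis (t : Finset I) : a * B t = c t • B (t ∆ {j} ∆ {i}) := by
    simp only [a, B, c, cliffordMonomialBasis_apply, mul_assoc, ι_mul_cliffordMonomial hb,
      mul_smul_comm, smul_smul]
  have basis_mul_a (t : Finset I) :
      B t * a = (-1 : R) ^ (#(t.erase i) + #(t.erase j)) • (a * B t) := by
    rw [cliffordMonomialBasis_apply, cliffordMonomial_mul_ι_mul_ι hb]
  have basis_mul_a_eq_neg : B s * a = -(a * B s) := by
    rw [cliffordMonomialBasis_apply, cliffordMonomial_mul_ι_mul_ι_of_mem_of_notMem hb hi hj]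
  have coord_commutator :
      B.coord (s ∆ {j} ∆ {i}) ∘ₗ (LinearMap.mulLeft R a - LinearMap.mulRight R a) =
        (2 * c s) • B.coord s := by
    refine B.ext fun t => ?_
    obtain rfl | hts := eq_or_ne t s
    · simp [basis_mul_a_eq_neg, a_mul_basis, two_mul]
    · simp [basis_mul_a, a_mul_basis, hts]
  have two_mul_repr : 2 * (c s * B.repr x s) = 0 := by
    simpa [hx.eq, mul_assoc] using (LinearMap.congr_fun coord_commutator x).symm
  have hc : c s = (-1) ^ (#{l ∈ s | l < j} + #{l ∈ s ∆ {j} | l < i}) * Q (b i) := by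
    have hij : i ≠ j := ne_of_mem_of_not_mem hi hj
    simp [c, hi, hj, hij, mem_symmDiff, pow_add, mul_assoc]
  rwa [(isUnit_of_invertible (2 : R)).mul_right_eq_zero, hc, mul_assoc,
    (isUnit_neg_one.pow _).mul_right_eq_zero] at two_mul_repr

end Basis

section Center

variable {R M I : Type*} [CommRing R] [IsDomain R] [Invertible (2 : R)] [AddCommGroup M]
  [Module R M] [LinearOrder I] [Fintype I] {Q : QuadraticForm R M} {b : Basis I R M}

theorem repr_cliffordMonomialBasis_eq_zero_of_commute
    (hb : Pairwise fun i j => Q.IsOrtho (b i) (b j)) (hrad : {i | Q (b i) = 0}.Subsingleton)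
    {x : CliffordAlgebra Q} (hx : x ∈ even Q) (hcomm : ∀ y ∈ even Q, Commute y x) {s : Finset I}
    (hs : s ≠ ∅) (hs' : s ≠ univ) : (cliffordMonomialBasis b hb).repr x s = 0 := by
  obtain heven | hodd := Nat.even_or_odd #s
  · obtain ⟨j, hj⟩ : ∃ j, j ∉ s := by simpa [eq_univ_iff_forall] using hs'
    have hcard : 1 < #s := by
      have := card_pos.2 (nonempty_iff_ne_empty.2 hs)
      grind
    obtain ⟨i, hi, i', hi', hne⟩ := one_lt_card.1 hcard
    have mul_repr (l : I) (hl : l ∈ s) : Q (b l) * (cliffordMonomialBasis b hb).repr x s = 0 :=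
      mul_repr_cliffordMonomialBasis_eq_zero_of_commute hb
        (hcomm _ (ι_mul_ι_mem_evenOdd_zero Q _ _)) hl hj
    by_contra hx0
    exact hne (hrad ((mul_eq_zero_iff_right hx0).1 (mul_repr i hi))
      ((mul_eq_zero_iff_right hx0).1 (mul_repr i' hi')))
  · exact repr_cliffordMonomialBasis_eq_zero_of_mem_even hb hx hodd

theorem map_center_even_eq_span (hb : Pairwise fun i j => Q.IsOrtho (b i) (b j))
    (hrad : {i | Q (b i) = 0}.Subsingleton) (hI : Even (Fintype.card I)) :
    Subalgebra.toSubmodule ((Subalgebra.center R (even Q)).map (even Q).val) =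
      Submodule.span R (cliffordMonomialBasis b hb '' {∅, univ}) := by
  refine le_antisymm ?_ ?_
  · rintro _ ⟨x, hx, rfl⟩
    rw [Basis.mem_span_image]
    intro s hs
    by_contra hs'
    rw [Set.mem_insert_iff, Set.mem_singleton_iff, not_or] at hs'
    have hcomm : ∀ y ∈ even Q, Commute y (x : CliffordAlgebra Q) := fun y hy =>
      congr_arg Subtype.val (Subalgebra.mem_center_iff.1 hx ⟨y, hy⟩)
    exact Finsupp.mem_support_iff.1 hs
      (repr_cliffordMonomialBasis_eq_zero_of_commute hb hrad x.2 hcomm hs'.1 hs'.2)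
  · have mem_of_commute {x : CliffordAlgebra Q} (hx : x ∈ even Q)
        (hcomm : ∀ y ∈ even Q, Commute y x) :
        x ∈ (Subalgebra.center R (even Q)).map (even Q).val :=
      ⟨⟨x, hx⟩, Subalgebra.mem_center_iff.2 fun y => Subtype.ext (hcomm y y.2), rfl⟩
    rw [Submodule.span_le, Set.image_pair, cliffordMonomialBasis_apply,
      cliffordMonomialBasis_apply, Set.pair_subset_iff, cliffordMonomial_empty]
    exact ⟨mem_of_commute (one_mem _) fun y _ => Commute.one_right y,
      mem_of_commute (cliffordMonomial_mem_even (by rwa [card_univ])) fun y hy =>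
        commute_of_mem_even_of_anticomm hy (ι_mul_cliffordMonomial_univ hb b.span_eq hI)⟩

theorem finrank_center_even_eq_two [Nonempty I]
    (hb : Pairwise fun i j => Q.IsOrtho (b i) (b j)) (hrad : {i | Q (b i) = 0}.Subsingleton)
    (hI : Even (Fintype.card I)) : finrank R (Subalgebra.center R (even Q)) = 2 := by
  set B := cliffordMonomialBasis b hb
  have hindep := B.linearIndependent.comp
    ((↑) : ({∅, univ} : Finset (Finset I)) → Finset I) Subtype.val_injective
  have hrange : B '' {∅, univ} = Set.range (B ∘ ((↑) : ({∅, univ} : Finset (Finset I)) → _)) := by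
    rw [Set.range_comp, Subtype.range_coe, coe_pair]
  calc finrank R (Subalgebra.center R (even Q))
      = finrank R ((Subalgebra.center R (even Q)).map (even Q).val) :=
        ((Subalgebra.center R (even Q)).equivMapOfInjective _
          Subtype.val_injective).toLinearEquiv.finrank_eq
    _ = finrank R (Submodule.span R (B '' {∅, univ})) := by
        rw [← map_center_even_eq_span hb hrad hI]; rfl
    _ = #{∅, (univ : Finset I)} := by
        rw [hrange, finrank_span_eq_card hindep, Fintype.card_coe]
    _ = 2 := card_pair univ_nonempty.ne_empty.symm

end Center

section Field

variable {k V : Type*} [Field k] [Invertible (2 : k)] [AddCommGroup V] [Module k V]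
  [FiniteDimensional k V]

theorem exists_orthogonal_basis_ncard_eq_finrank_ker_polarBilin (Q : QuadraticForm k V) :
    ∃ b : Basis (Fin (finrank k V)) k V, (Pairwise fun i j => Q.IsOrtho (b i) (b j)) ∧
      {i | Q (b i) = 0}.ncard = finrank k (LinearMap.ker Q.polarBilin) := by
  obtain ⟨b, hb⟩ :=
    LinearMap.BilinForm.exists_orthogonal_basis (QuadraticForm.associated_isSymm k Q)
  have : NeZero (2 : k) := ⟨Invertible.ne_zero 2⟩
  refine ⟨b, fun i j hij => QuadraticMap.associated_isOrtho.1 (hb hij), ?_⟩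
  rw [← QuadraticMap.radical_eq_ker_polarBilin,
    QuadraticForm.finrank_radical_of_equiv_weightedSumSquares
      ⟨Q.isometryEquivWeightedSumSquares b hb⟩]

theorem center_even_clifford_rank_two_of_corank_le_one_general [Nontrivial V]
    (Q : QuadraticForm k V) (heven : Even (finrank k V))
    (hcorank : finrank k (LinearMap.ker Q.polarBilin) ≤ 1) :
    finrank k (Subalgebra.center k (even Q)) = 2 := by
  obtain ⟨b, hb, hker⟩ := exists_orthogonal_basis_ncard_eq_finrank_ker_polarBilin Q
  have : Nonempty (Fin (finrank k V)) := b.index_nonempty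
  exact finrank_center_even_eq_two hb (Set.ncard_le_one_iff_subsingleton.1 (hker.trans_le hcorank))
    (by rwa [Fintype.card_fin])

end Field

/-- If `dim V = 4` and the radical of the polar form of `q` has dimension
at most `1` (corank at most `1`), then the center of the even Clifford algebra
`Cl(q)₀` is a 2-dimensional `k`-vector space. -/
theorem center_even_clifford_rank_two_of_corank_le_one
    {k V : Type*} [Field k] [Invertible (2 : k)]
    [AddCommGroup V] [Module k V] [FiniteDimensional k V]
    (Q : QuadraticForm k V)
    (h4 : Module.finrank k V = 4)
    (hcorank : Module.finrank k ↥(LinearMap.ker (QuadraticMap.polarBilin Q)) ≤ 1) :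
    Module.finrank k ↥(Subalgebra.center k ↥(even Q)) = 2 := by
  have : Nontrivial V := Module.nontrivial_of_finrank_pos (R := k) (by lia)
  exact center_even_clifford_rank_two_of_corank_le_one_general Q (h4 ▸ by decide) hcorank
end
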